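/- Let τ be a first-order language and let S and T be τ-theories. Say that a τ-sentence ψ separates T from S if every model of T satisfies ψ and every model of S satisfies ¬ψ. Then the following are equivalent: (1) no universal (Π₁) τ-sentence separates T from S; (2) there exist a model M of S, a model N of T, and a τ-embedding of M into N. -/

import Mathlib

open FirstOrder FirstOrder.Language

universe u v

namespace ModelCompanionship

variable {L : FirstOrder.Language.{u, v}}

/-- Iterated existential quantification over the last `k` bound variables. -/
def exsN {α : Type*} : ∀ {n k : ℕ}, L.BoundedFormula α (n + k) → L.BoundedFormula α n
  | _, 0, φ => φ
  | _, _ + 1, φ => exsN φ.ex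

/-- A sentence is universal (Π₁) if it is the universal closure of a
quantifier-free formula. -/
def IsUniversalSentence (φ : L.Sentence) : Prop :=
  ∃ (n : ℕ) (ψ : L.BoundedFormula Empty n), ψ.IsQF ∧ φ = ψ.alls

/-- A sentence is Π₂ if it is of the form `∀ x⃗ ∃ y⃗ φ` with `φ` quantifier-free. -/
def IsPi2Sentence (φ : L.Sentence) : Prop :=
  ∃ (m k : ℕ) (ψ : L.BoundedFormula Empty (m + k)), ψ.IsQF ∧ φ = (exsN ψ).alls

/-- A formula is existential if it is the existential closure of a
quantifier-free formula. -/
def IsExistentialFormula {α : Type*} (φ : L.Formula α) : Prop :=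
  ∃ (n : ℕ) (ψ : L.BoundedFormula α n), ψ.IsQF ∧ φ = ψ.exs

/-- A formula is universal if it is the universal closure of a
quantifier-free formula. -/
def IsUniversalFormula {α : Type*} (φ : L.Formula α) : Prop :=
  ∃ (n : ℕ) (ψ : L.BoundedFormula α n), ψ.IsQF ∧ φ = ψ.alls

/-- A bundled nonempty `L`-structure (with domain in universe `max u v`). -/
structure BStruc (L : FirstOrder.Language.{u, v}) where
  carrier : Type (max u v)
  [str : L.Structure carrier]
  [nonempty' : Nonempty carrier]

instance (N : BStruc L) : L.Structure N.carrier := N.str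

instance (N : BStruc L) : Nonempty N.carrier := N.nonempty'

/-- `φ` is a semantic consequence of `T`: it holds in every (nonempty) model of `T`. -/
def Consequence (T : L.Theory) (φ : L.Sentence) : Prop :=
  ∀ M : BStruc L, M.carrier ⊨ T → M.carrier ⊨ φ

/-- A formula with free variables is a semantic consequence of `T` if its universal
closure holds in every (nonempty) model of `T`. -/
def FormulaConsequence {α : Type*} (T : L.Theory) (φ : L.Formula α) : Prop :=
  ∀ M : BStruc L, M.carrier ⊨ T → ∀ v : α → M.carrier, φ.Realize v

/-- `T_∀`: the set of universal sentences which are consequences of `T`. -/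
def univConsequences (T : L.Theory) : L.Theory :=
  {φ | IsUniversalSentence φ ∧ Consequence T φ}

/-- A theory is complete if it is satisfiable and decides every sentence. -/
def IsCompleteTheory (T : L.Theory) : Prop :=
  T.IsSatisfiable ∧ ∀ φ : L.Sentence, Consequence T φ ∨ Consequence T φ.not

/-- A theory is Π₁-complete if it is satisfiable and decides every universal sentence. -/
def Pi1Complete (T : L.Theory) : Prop :=
  T.IsSatisfiable ∧ ∀ φ : L.Sentence, IsUniversalSentence φ →
    (Consequence T φ ∨ Consequence T φ.not)

/-- An embedding is Σ₁-elementary (`M ≺₁ N`) if it reflects existential formulas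
with parameters in the domain. -/
def Sigma1Elementary {M : Type*} {N : Type*} [L.Structure M] [L.Structure N]
    (j : M ↪[L] N) : Prop :=
  ∀ (n : ℕ) (φ : L.Formula (Fin n)), IsExistentialFormula φ →
    ∀ a : Fin n → M, φ.Realize (fun i => j (a i)) → φ.Realize a

/-- An embedding is elementary if it preserves and reflects all first-order formulas. -/
def ElementaryEmb {M : Type*} {N : Type*} [L.Structure M] [L.Structure N]
    (j : M ↪[L] N) : Prop :=
  ∀ (n : ℕ) (φ : L.Formula (Fin n)) (a : Fin n → M),
    φ.Realize (fun i => j (a i)) ↔ φ.Realize a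

/-- `M` is `T`-existentially closed: it embeds into a model of `T` and every
embedding of `M` into a model of `T` is Σ₁-elementary. -/
def IsEC (T : L.Theory) (M : Type*) [L.Structure M] : Prop :=
  (∃ N : BStruc L, N.carrier ⊨ T ∧ Nonempty (M ↪[L] N.carrier)) ∧
  ∀ N : BStruc L, N.carrier ⊨ T → ∀ j : M ↪[L] N.carrier, Sigma1Elementary j

/-- A theory is model complete if every embedding between its models is elementary. -/
def ModelComplete (T : L.Theory) : Prop :=
  ∀ M N : BStruc L, M.carrier ⊨ T → N.carrier ⊨ T →
    ∀ j : M.carrier ↪[L] N.carrier, ElementaryEmb j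

/-- `Tstar` is the model companion of `T`. -/
def IsModelCompanion (T Tstar : L.Theory) : Prop :=
  (∀ M : BStruc L, M.carrier ⊨ T →
    ∃ N : BStruc L, N.carrier ⊨ Tstar ∧ Nonempty (M.carrier ↪[L] N.carrier)) ∧
  (∀ M : BStruc L, M.carrier ⊨ Tstar →
    ∃ N : BStruc L, N.carrier ⊨ T ∧ Nonempty (M.carrier ↪[L] N.carrier)) ∧
  ModelComplete Tstar

/-- Every formula depends on finitely many variables: there are maps to and from `Fin (n+1)`. -/
theorem finSupport {α : Type*} [Nonempty α] (φ : L.Formula α) :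
    ∃ (n : ℕ) (g : α → Fin (n + 1)) (h : Fin (n + 1) → α),
      ∀ (M : Type (max u v)) [L.Structure M] (w : α → M),
        φ.Realize (w ∘ h ∘ g) ↔ φ.Realize w := by
  classical
  let s := φ.freeVarFinset
  let e := s.equivFin
  refine ⟨s.card, fun a => if ha : a ∈ s then (e ⟨a, ha⟩).castSucc else Fin.last _,
    fun i => if hi : (i : ℕ) < s.card then (e.symm ⟨i, hi⟩ : α)
      else Classical.arbitrary α, ?_⟩
  intro M _ w
  have h1 := BoundedFormula.realize_restrictFreeVar (φ := φ) (f := fun a => (a : α))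
    (v := w) (xs := default) w (fun _ => rfl)
  refine Iff.trans ?_ h1
  refine (BoundedFormula.realize_restrictFreeVar (φ := φ) (f := fun a => (a : α))
    (v := w) (xs := default) _ (fun a => ?_)).symm
  have ha : (a : α) ∈ s := a.2
  simp [ha]

/-- The universal closure of a quantifier-free formula is a universal sentence. -/
theorem exists_closure {α : Type*} [Nonempty α] (φ : L.Formula α) (hφ : φ.IsQF) :
    ∃ ψ : L.Sentence, IsUniversalSentence ψ ∧
      ∀ (M : Type (max u v)) [L.Structure M],
        M ⊨ ψ ↔ ∀ w : α → M, φ.Realize w := by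
  obtain ⟨n, g, h, H⟩ := finSupport φ
  refine ⟨(BoundedFormula.relabel (n := n + 1) (Sum.inr ∘ g) φ : L.BoundedFormula Empty _).alls,
    ⟨_, _, hφ.relabel _, rfl⟩, ?_⟩
  intro M _
  rw [Sentence.Realize, BoundedFormula.realize_alls]
  have aux : ∀ xs : Fin (n + 1 + 0) → M,
      (BoundedFormula.relabel (n := n + 1) (Sum.inr ∘ g) φ :
        L.BoundedFormula Empty _).Realize default xs ↔ φ.Realize (xs ∘ g) := by
    intro xs
    rw [BoundedFormula.realize_relabel, Formula.boundedFormula_realize_eq_realize]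
    rfl
  constructor
  · intro hx w
    have := (aux (w ∘ h)).1 (hx _)
    exact (H M w).1 this
  · intro hw xs
    exact (aux xs).2 (hw _)

/-- Finite conjunctions of quantifier-free formulas. -/
theorem exists_conj {α : Type*} (F : Finset (L.Formula α)) (hF : ∀ φ ∈ F, φ.IsQF) :
    ∃ χ : L.Formula α, χ.IsQF ∧ ∀ (M : Type (max u v)) [L.Structure M] (w : α → M),
      χ.Realize w ↔ ∀ φ ∈ F, φ.Realize w := by
  classical
  induction F using Finset.induction_on with
  | empty => exact ⟨⊤, BoundedFormula.IsQF.top, by simp⟩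
  | insert a s _ ih =>
    obtain ⟨χ, h1, h2⟩ := ih (fun φ h => hF φ (Finset.mem_insert_of_mem h))
    refine ⟨a ⊓ χ, (hF a (Finset.mem_insert_self _ _)).inf h1, ?_⟩
    intro M _ w
    rw [Formula.realize_inf, h2, Finset.forall_mem_insert]

/-- If `N` realizes the quantifier-free diagram of `M`, then `M` embeds into `N`. -/
theorem embedding_of_diagram {M N : Type (max u v)} [L.Structure M] [L.Structure N]
    (w : M → N) (H : ∀ φ : L.Formula M, φ.IsQF → φ.Realize id → φ.Realize w) :
    Nonempty (M ↪[L] N) := by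
  have H' : ∀ φ : L.Formula M, φ.IsQF → (φ.Realize w ↔ φ.Realize id) := by
    intro φ hφ
    refine ⟨fun h => ?_, H φ hφ⟩
    by_contra hn
    exact H (Formula.not φ) hφ.not (Formula.realize_not.2 hn) h
  refine ⟨{ toFun := w, inj' := ?_, map_fun' := ?_, map_rel' := ?_ }⟩
  · intro a b hab
    have := H' ((Term.var a).equal (Term.var b)) (BoundedFormula.IsAtomic.equal _ _).isQF
    simpa using this.1 (by simpa using hab)
  · intro n f x
    have := H' ((Term.var (Structure.funMap f x)).equal (Term.func f (fun i => Term.var (x i))))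
      (BoundedFormula.IsAtomic.equal _ _).isQF
    simpa [Function.comp_def] using this.2 (by simp)
  · intro n r x
    have := H' (r.formula (fun i => Term.var (x i)))
      (BoundedFormula.IsAtomic.rel _ _).isQF
    simpa [Formula.realize_rel, Function.comp_def] using this

/-- The quantifier-free formulas in countably many variables valid in all models of `T`. -/
def QFCons (T : L.Theory) (φ : L.Formula ℕ) : Prop :=
  φ.IsQF ∧ ∀ (N : BStruc L), N.carrier ⊨ T → ∀ w : ℕ → N.carrier, φ.Realize w

theorem exists_model_S (T S : L.Theory)
    (hsep : ¬ ∃ ψ : L.Sentence, IsUniversalSentence ψ ∧ Consequence T ψ ∧ Consequence S ψ.not) :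
    ∃ M : BStruc L, M.carrier ⊨ S ∧
      ∀ φ : L.Formula ℕ, QFCons T φ → ∀ w : ℕ → M.carrier, φ.Realize w := by
  classical
  choose! U hU1 hU2 using fun (φ : L.Formula ℕ) (hφ : φ.IsQF) => exists_closure φ hφ
  have hsat : (S ∪ U '' {φ | QFCons T φ}).IsSatisfiable := by
    rw [Theory.isSatisfiable_iff_isFinitelySatisfiable]
    intro T0 hT0
    have hch : ∃ F : Finset (L.Formula ℕ), (∀ φ ∈ F, QFCons T φ) ∧
        ∀ ψ ∈ T0, ψ ∈ S ∨ ∃ φ ∈ F, U φ = ψ := by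
      have : ∀ ψ : L.Sentence, ∃ φ : L.Formula ℕ, ψ ∈ U '' {φ | QFCons T φ} →
          QFCons T φ ∧ U φ = ψ := by
        intro ψ
        by_cases h : ψ ∈ U '' {φ | QFCons T φ}
        · obtain ⟨φ, h1, h2⟩ := h
          exact ⟨φ, fun _ => ⟨h1, h2⟩⟩
        · exact ⟨⊤, fun h' => absurd h' h⟩
      choose f hf using this
      refine ⟨(T0.filter (fun ψ => ψ ∈ U '' {φ | QFCons T φ})).image f, ?_, ?_⟩
      · intro φ hφ
        obtain ⟨ψ, h1, rfl⟩ := Finset.mem_image.1 hφ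
        exact (hf ψ (Finset.mem_filter.1 h1).2).1
      · intro ψ hψ
        rcases hT0 hψ with h | h
        · exact Or.inl h
        · exact Or.inr ⟨f ψ, Finset.mem_image_of_mem _ (Finset.mem_filter.2 ⟨hψ, h⟩), (hf ψ h).2⟩
    obtain ⟨F, hF, hF'⟩ := hch
    obtain ⟨χ, hχ, hχ'⟩ := exists_conj F (fun φ h => (hF φ h).1)
    have hT : Consequence T (U χ) := by
      intro N hN
      refine (hU2 χ hχ _).2 fun w => (hχ' _ w).2 fun φ h => (hF φ h).2 N hN w
    have hS : ¬ Consequence S (U χ).not := fun h => hsep ⟨U χ, hU1 χ hχ, hT, h⟩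
    unfold Consequence at hS
    push Not at hS
    obtain ⟨M, hM, hM'⟩ := hS
    rw [Sentence.realize_not, not_not] at hM'
    have : M.carrier ⊨ (T0 : L.Theory) := by
      refine ⟨fun ψ hψ => ?_⟩
      rcases hF' ψ hψ with h | ⟨φ, h, rfl⟩
      · exact hM.realize_of_mem ψ h
      · exact (hU2 φ (hF φ h).1 _).2 fun w => (hχ' _ w).1 ((hU2 χ hχ _).1 hM' w) φ h
    exact Theory.Model.isSatisfiable M.carrier
  obtain ⟨M⟩ := hsat
  refine ⟨⟨M⟩, ⟨fun ψ h => M.is_model.realize_of_mem ψ (Or.inl h)⟩, ?_⟩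
  intro φ hφ
  exact (hU2 φ hφ.1 M).1 (M.is_model.realize_of_mem _ (Or.inr ⟨φ, hφ, rfl⟩))

theorem exists_realization (T : L.Theory) (M : BStruc L)
    (hM : ∀ φ : L.Formula ℕ, QFCons T φ → ∀ w : ℕ → M.carrier, φ.Realize w)
    (χ : L.Formula M.carrier) (hχ : χ.IsQF) (hid : χ.Realize id) :
    ∃ (N : BStruc L), N.carrier ⊨ T ∧ ∃ w : M.carrier → N.carrier, χ.Realize w := by
  by_contra hcon
  push Not at hcon
  obtain ⟨n, g, h, H⟩ := finSupport χ
  have hq : QFCons T (Formula.not (χ.relabel (fun a => (g a : ℕ)))) := by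
    refine ⟨BoundedFormula.IsQF.not (hχ.relabel _), fun N hN w => ?_⟩
    rw [Formula.realize_not, Formula.realize_relabel]
    exact hcon N hN _
  have := hM _ hq (fun i => h (Fin.ofNat (n + 1) i))
  rw [Formula.realize_not, Formula.realize_relabel] at this
  apply this
  have h2 := (H _ id).2 hid
  convert h2 using 1
  funext a
  simp

theorem exists_model_T (T : L.Theory) (M : BStruc L)
    (hM : ∀ φ : L.Formula ℕ, QFCons T φ → ∀ w : ℕ → M.carrier, φ.Realize w) :
    ∃ N : BStruc L, N.carrier ⊨ T ∧ Nonempty (M.carrier ↪[L] N.carrier) := by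
  classical
  let D : Set (L.Formula M.carrier) := {φ | φ.IsQF ∧ φ.Realize id}
  have hsat : ((L.lhomWithConstants M.carrier).onTheory T ∪
      {ψ | Formula.equivSentence.symm ψ ∈ D}).IsSatisfiable := by
    rw [Theory.isSatisfiable_iff_isFinitelySatisfiable]
    intro T0 hT0
    let F := (T0.image Formula.equivSentence.symm).filter (fun φ => φ ∈ D)
    obtain ⟨χ, hχ, hχ'⟩ := exists_conj F (fun φ h => (Finset.mem_filter.1 h).2.1)
    obtain ⟨N, hN, w, hw⟩ := exists_realization T M hM χ hχ
      ((hχ' _ _).2 fun φ h => (Finset.mem_filter.1 h).2.2)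
    let : (constantsOn M.carrier).Structure N.carrier := constantsOn.structure w
    have h1 : N.carrier ⊨ (L.lhomWithConstants M.carrier).onTheory T :=
      (LHom.onTheory_model _ _).2 hN
    have : N.carrier ⊨ (T0 : (L[[M.carrier]]).Theory) := by
      refine ⟨fun ψ hψ => ?_⟩
      rcases hT0 hψ with h | h
      · exact h1.realize_of_mem ψ h
      · exact (Formula.realize_equivSentence_symm _ ψ w).1 ((hχ' _ _).1 hw _
          (Finset.mem_filter.2 ⟨Finset.mem_image_of_mem _ hψ, h⟩))
    exact Theory.Model.isSatisfiable N.carrier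
  obtain ⟨N⟩ := hsat
  let := (L.lhomWithConstants M.carrier).reduct N
  have hT : N ⊨ (L.lhomWithConstants M.carrier).onTheory T :=
    ⟨fun ψ h => N.is_model.realize_of_mem ψ (Or.inl h)⟩
  refine ⟨⟨N⟩, (LHom.onTheory_model _ _).1 hT, ?_⟩
  refine embedding_of_diagram (N := N) (fun a => (L.con a : N)) fun φ h1 h2 => ?_
  rw [← Formula.realize_equivSentence]
  refine N.is_model.realize_of_mem _ (Or.inr ?_)
  change Formula.equivSentence.symm (Formula.equivSentence φ) ∈ D
  rw [Equiv.symm_apply_apply]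
  exact ⟨h1, h2⟩

/-- A universal sentence separates `T` from `S` iff no model of `S` embeds into a
model of `T`. -/
theorem no_universal_separation_iff_embedding (T S : L.Theory) :
    (¬ ∃ ψ : L.Sentence, IsUniversalSentence ψ ∧ Consequence T ψ ∧ Consequence S ψ.not) ↔
      ∃ (M N : BStruc L), M.carrier ⊨ S ∧ N.carrier ⊨ T ∧
        Nonempty (M.carrier ↪[L] N.carrier) := by
  constructor
  · intro hsep
    obtain ⟨M, hMS, hM⟩ := exists_model_S T S hsep
    obtain ⟨N, hN, e⟩ := exists_model_T T M hM
    exact ⟨M, N, hMS, hN, e⟩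
  · rintro ⟨M, N, hM, hN, ⟨e⟩⟩ ⟨ψ, ⟨n, θ, hθ, rfl⟩, hT, hS⟩
    have h1 := hT N hN
    have h2 := hS M hM
    rw [Sentence.realize_not] at h2
    apply h2
    rw [Sentence.Realize, BoundedFormula.realize_alls] at h1 ⊢
    intro xs
    rw [← hθ.realize_embedding e]
    have h3 := h1 (e ∘ xs)
    rwa [Subsingleton.elim (e ∘ (default : Empty → M.carrier)) default]

end ModelCompanionship
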